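/- Let N = 3 and let A_0, A_1, A_2 be the harmonic extension matrices for SG_3. Suppose μ : {0,1,2}×{0,1,2} → ℝ satisfies 0 < μ_{ij}, μ_{ii} < 1/9 for each i, and μ_{ij} < 1/√(17+4√13) for i ≠ j. Then for every pair (i,j), (3/5)²·μ_{ij}·K_{ij} < 1, where K_{ij} is the least K ≥ 0 such that E((A_i A_j)^{−1} v) ≤ K² E(v) for all v ∈ ℝ³. -/

import Mathlib

open Matrix Filter

/-- The harmonic extension matrix `A_i` for `SG_N`. -/
noncomputable def harmA (N : ℕ) (i : Fin N) : Matrix (Fin N) (Fin N) ℝ :=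
  Matrix.of fun j k =>
    if j = i then (if k = i then 1 else 0)
    else if k = i then 2 / (N + 2)
    else (1 + if j = k then 1 else 0) / (N + 2)

/-- The energy bilinear form `E(u,v) = ∑_{k<l} (u_k - u_l)(v_k - v_l)` on `ℝ^N`. -/
noncomputable def energy (N : ℕ) (u v : Fin N → ℝ) : ℝ :=
  ∑ k : Fin N, ∑ l : Fin N, if k < l then (u k - u l) * (v k - v l) else 0

/-!
Write `e_i` for the indicator of the vertex `i` and `∂_i v = E(e_i, v)` for the normal derivative
there. Modulo constants, which have zero energy, `(N + 2) A_i v = v + (∂_i v) e_i`, so `A_i` is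
`E`-self-adjoint with eigenvalues `N / (N + 2)` on `e_i` and `1 / (N + 2)` on its `E`-orthogonal
complement. Hence `A_i⁻¹` stretches the root of the energy by at most `N + 2`, which suffices on
the diagonal. For `i ≠ j`,
`(N + 2)⁴ E(A_i A_j v) = E(v) + (N + 1) ((∂_j v)² + (∂_i v - ∂_j v)²)`; when `N = 3` the energy is
a quadratic form in `∂_i v` and `∂_j v` alone, and the two binary forms are compared directly.
-/

section

variable {N : ℕ}

/-- The normal derivative `∂_i v = ∑_k (v_i - v_k)` of `v` at the vertices of the complete graph on
`Fin N`. It represents the energy form against the dot product, and `A_i` is a rank-one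
perturbation of a scalar in terms of it. -/
noncomputable def normalDeriv (v : Fin N → ℝ) : Fin N → ℝ :=
  fun i => ∑ k, (v i - v k)

theorem normalDeriv_apply (v : Fin N → ℝ) (i : Fin N) :
    normalDeriv v i = N * v i - ∑ k, v k := by
  simp [normalDeriv]

theorem sum_normalDeriv (v : Fin N → ℝ) : ∑ i, normalDeriv v i = 0 := by
  simp [normalDeriv_apply, ← Finset.mul_sum]

theorem normalDeriv_single_self (i : Fin N) : normalDeriv (Pi.single i 1) i = N - 1 := by
  simp [normalDeriv_apply]

theorem normalDeriv_single_of_ne {i j : Fin N} (hij : i ≠ j) :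
    normalDeriv (Pi.single j 1) i = -1 := by
  simp [normalDeriv_apply, hij]

theorem energy_comm (u v : Fin N → ℝ) : energy N u v = energy N v u := by
  simp only [energy, mul_comm]

theorem energy_eq_dotProduct_normalDeriv (u v : Fin N → ℝ) :
    energy N u v = u ⬝ᵥ normalDeriv v := by
  calc energy N u v
      = (∑ k, ∑ l, if k < l then u k * (v k - v l) else 0)
          + ∑ k, ∑ l, if k < l then u l * (v l - v k) else 0 := by
        simp only [energy, ← Finset.sum_add_distrib]
        refine Finset.sum_congr rfl fun k _ => Finset.sum_congr rfl fun l _ => ?_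
        split_ifs <;> ring
    _ = (∑ k, ∑ l, if k < l then u k * (v k - v l) else 0)
          + ∑ k, ∑ l, if l < k then u k * (v k - v l) else 0 := by
        rw [Finset.sum_comm (f := fun k l => if k < l then u l * (v l - v k) else 0)]
    _ = ∑ k, ∑ l, u k * (v k - v l) := by
        simp only [← Finset.sum_add_distrib]
        refine Finset.sum_congr rfl fun k _ => Finset.sum_congr rfl fun l _ => ?_
        rcases lt_trichotomy k l with h | rfl | h
        · simp [h, h.not_gt]
        · simp
        · simp [h, h.not_gt]
    _ = u ⬝ᵥ normalDeriv v := by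
        simp only [dotProduct, normalDeriv, Finset.mul_sum]

theorem energy_single_right (u : Fin N → ℝ) (i : Fin N) :
    energy N u (Pi.single i 1) = normalDeriv u i := by
  rw [energy_comm, energy_eq_dotProduct_normalDeriv, single_one_dotProduct]

theorem harmA_mulVec_apply_self (i : Fin N) (v : Fin N → ℝ) : (harmA N i *ᵥ v) i = v i := by
  simp [harmA, mulVec, dotProduct]

theorem harmA_mulVec_apply_of_ne {i j : Fin N} (hij : i ≠ j) (v : Fin N → ℝ) :
    (harmA N i *ᵥ v) j = (v j + v i + ∑ k, v k) / (N + 2) := by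
  have entry (k : Fin N) : harmA N i j k * v k
      = ((if j = k then v k else 0) + (if k = i then v k else 0) + v k) / (N + 2) := by
    simp only [harmA, of_apply, if_neg hij.symm]
    split_ifs with hki hjk
    · exact absurd (hjk.trans hki).symm hij
    all_goals ring
  simp only [mulVec, dotProduct, entry, ← Finset.sum_div, Finset.sum_add_distrib,
    Finset.sum_ite_eq, Finset.sum_ite_eq', Finset.mem_univ, if_true]

theorem harmA_mulVec (i : Fin N) (v : Fin N → ℝ) :
    harmA N i *ᵥ v = ((N : ℝ) + 2)⁻¹ •
      (v + normalDeriv v i • Pi.single i 1 + (v i + ∑ k, v k) • 1) := by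
  ext j
  simp only [Pi.smul_apply, Pi.add_apply, Pi.one_apply, smul_eq_mul, mul_one]
  rcases eq_or_ne i j with rfl | hij
  · rw [harmA_mulVec_apply_self, normalDeriv_apply, Pi.single_eq_same]
    field_simp
    ring
  · rw [harmA_mulVec_apply_of_ne hij, Pi.single_eq_of_ne hij.symm]
    ring

theorem energy_harmA_mulVec_left (i : Fin N) (u v : Fin N → ℝ) :
    (N + 2) * energy N (harmA N i *ᵥ u) v = energy N u v + normalDeriv u i * normalDeriv v i := by
  have hN : (N : ℝ) + 2 ≠ 0 := by positivity
  simp only [energy_eq_dotProduct_normalDeriv, harmA_mulVec, smul_dotProduct, add_dotProduct,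
    single_one_dotProduct, one_dotProduct, sum_normalDeriv, smul_eq_mul, mul_zero, add_zero]
  exact mul_inv_cancel_left₀ hN _

theorem normalDeriv_harmA_mulVec_self (i : Fin N) (v : Fin N → ℝ) :
    (N + 2) * normalDeriv (harmA N i *ᵥ v) i = N * normalDeriv v i := by
  rw [← energy_single_right, energy_harmA_mulVec_left, energy_single_right,
    normalDeriv_single_self]
  ring

theorem normalDeriv_harmA_mulVec_of_ne {i j : Fin N} (hij : i ≠ j) (v : Fin N → ℝ) :
    (N + 2) * normalDeriv (harmA N i *ᵥ v) j = normalDeriv v j - normalDeriv v i := by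
  rw [← energy_single_right, energy_harmA_mulVec_left, energy_single_right,
    normalDeriv_single_of_ne hij]
  ring

theorem energy_harmA_mulVec_self (i : Fin N) (v : Fin N → ℝ) :
    (N + 2) ^ 2 * energy N (harmA N i *ᵥ v) (harmA N i *ᵥ v)
      = energy N v v + (N + 1) * normalDeriv v i ^ 2 := by
  have outer := energy_harmA_mulVec_left i v (harmA N i *ᵥ v)
  have inner := energy_harmA_mulVec_left i v v
  have deriv := normalDeriv_harmA_mulVec_self i v
  rw [energy_comm v] at outer
  linear_combination (N + 2 : ℝ) * outer + inner + normalDeriv v i * deriv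

theorem energy_le_energy_harmA_mulVec (i : Fin N) (v : Fin N → ℝ) :
    energy N v v ≤ (N + 2) ^ 2 * energy N (harmA N i *ᵥ v) (harmA N i *ᵥ v) := by
  rw [energy_harmA_mulVec_self]
  exact le_add_of_nonneg_right (by positivity)

theorem energy_harmA_mulVec_harmA_mulVec {i j : Fin N} (hij : i ≠ j) (v : Fin N → ℝ) :
    (N + 2) ^ 4 * energy N (harmA N i *ᵥ harmA N j *ᵥ v) (harmA N i *ᵥ harmA N j *ᵥ v)
      = energy N v v
        + (N + 1) * (normalDeriv v j ^ 2 + (normalDeriv v i - normalDeriv v j) ^ 2) := by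
  have outer := energy_harmA_mulVec_self i (harmA N j *ᵥ v)
  have inner := energy_harmA_mulVec_self j v
  rw [← normalDeriv_harmA_mulVec_of_ne hij.symm]
  linear_combination (N + 2 : ℝ) ^ 2 * outer + inner

theorem isUnit_harmA (i : Fin N) : IsUnit (harmA N i) := by
  rw [← mulVec_injective_iff_isUnit, ← coe_mulVecLin, injective_iff_map_eq_zero]
  intro v hv
  rw [mulVecLin_apply] at hv
  have value : v i = 0 := by rw [← harmA_mulVec_apply_self i v, hv, Pi.zero_apply]
  have deriv : normalDeriv v i = 0 := by
    have hN : (N : ℝ) ≠ 0 := Nat.cast_ne_zero.2 i.pos.ne'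
    have h := normalDeriv_harmA_mulVec_self i v
    simpa [hv, normalDeriv_apply (0 : Fin N → ℝ), hN] using h
  have sum : ∑ k, v k = 0 := by simpa [normalDeriv_apply, value] using deriv
  have hN : (N : ℝ) + 2 ≠ 0 := by positivity
  simpa [value, deriv, sum, hN] using (harmA_mulVec i v).symm.trans hv

theorem energy_inv_mulVec_le {B : Matrix (Fin N) (Fin N) ℝ} (hB : IsUnit B) {c : ℝ}
    (h : ∀ w, energy N w w ≤ c * energy N (B *ᵥ w) (B *ᵥ w)) (v : Fin N → ℝ) :
    energy N (B⁻¹ *ᵥ v) (B⁻¹ *ᵥ v) ≤ c * energy N v v := by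
  have cancel : B *ᵥ B⁻¹ *ᵥ v = v := by
    rw [mulVec_mulVec, mul_nonsing_inv _ ((isUnit_iff_isUnit_det B).1 hB), one_mulVec]
  simpa only [cancel] using h (B⁻¹ *ᵥ v)

theorem energy_inv_harmA_mul_harmA_mulVec_le (i j : Fin N) (v : Fin N → ℝ) :
    energy N ((harmA N i * harmA N j)⁻¹ *ᵥ v) ((harmA N i * harmA N j)⁻¹ *ᵥ v)
      ≤ ((N + 2) ^ 2) ^ 2 * energy N v v := by
  refine energy_inv_mulVec_le ((isUnit_harmA i).mul (isUnit_harmA j)) (fun w => ?_) v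
  rw [← mulVec_mulVec]
  calc energy N w w
      ≤ (N + 2) ^ 2 * energy N (harmA N j *ᵥ w) (harmA N j *ᵥ w) :=
        energy_le_energy_harmA_mulVec j w
    _ ≤ (N + 2) ^ 2 * ((N + 2) ^ 2 *
          energy N (harmA N i *ᵥ harmA N j *ᵥ w) (harmA N i *ᵥ harmA N j *ᵥ w)) := by
        gcongr
        exact energy_le_energy_harmA_mulVec i _
    _ = ((N + 2) ^ 2) ^ 2 *
          energy N (harmA N i *ᵥ harmA N j *ᵥ w) (harmA N i *ᵥ harmA N j *ᵥ w) := by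
        ring

end

theorem energy_three_eq_normalDeriv {i j : Fin 3} (hij : i ≠ j) (v : Fin 3 → ℝ) :
    energy 3 v v = 2 / 3 * (normalDeriv v i ^ 2 + normalDeriv v i * normalDeriv v j
      + normalDeriv v j ^ 2) := by
  rw [energy_eq_dotProduct_normalDeriv]
  simp only [dotProduct, normalDeriv, Fin.sum_univ_three]
  fin_cases i <;> fin_cases j <;> first | exact absurd rfl hij | (dsimp; ring)

/- `(17 + 4√13) / 81` is the larger root of `81 t² - 34 t + 1`, the values of `t` for which the
difference of the two sides is degenerate, hence a multiple of a square. -/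
theorem quadForm_le_mul_quadForm (x y : ℝ) :
    x ^ 2 + x * y + y ^ 2 ≤ (17 + 4 * √13) / 81 * (7 * x ^ 2 - 11 * x * y + 13 * y ^ 2) := by
  have hs : √13 ^ 2 = 13 := Real.sq_sqrt (by norm_num)
  have hs3 : 3 ≤ √13 := Real.le_sqrt_of_sq_le (by norm_num)
  have square : (2 * √13 - 5) * (7 * x ^ 2 - 11 * x * y + 13 * y ^ 2
        - (17 - 4 * √13) * (x ^ 2 + x * y + y ^ 2))
      = 2 * ((2 * √13 - 5) * x + (√13 - 7) * y) ^ 2 := by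
    linear_combination 6 * y ^ 2 * hs
  have conjugate : (17 - 4 * √13) * (x ^ 2 + x * y + y ^ 2)
      ≤ 7 * x ^ 2 - 11 * x * y + 13 * y ^ 2 :=
    sub_nonneg.1 <| nonneg_of_mul_nonneg_right (square.symm ▸ by positivity)
      (by linarith : 0 < 2 * √13 - 5)
  calc x ^ 2 + x * y + y ^ 2
      = (17 + 4 * √13) / 81 * ((17 - 4 * √13) * (x ^ 2 + x * y + y ^ 2)) := by
        linear_combination 16 / 81 * (x ^ 2 + x * y + y ^ 2) * hs
    _ ≤ (17 + 4 * √13) / 81 * (7 * x ^ 2 - 11 * x * y + 13 * y ^ 2) := by gcongr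

theorem energy_inv_harmA_mul_harmA_mulVec_le_of_ne {i j : Fin 3} (hij : i ≠ j) (v : Fin 3 → ℝ) :
    energy 3 ((harmA 3 i * harmA 3 j)⁻¹ *ᵥ v) ((harmA 3 i * harmA 3 j)⁻¹ *ᵥ v)
      ≤ (25 / 9 * √(17 + 4 * √13)) ^ 2 * energy 3 v v := by
  refine energy_inv_mulVec_le ((isUnit_harmA i).mul (isUnit_harmA j)) (fun w => ?_) v
  have product := energy_harmA_mulVec_harmA_mulVec hij w
  rw [energy_three_eq_normalDeriv hij w] at product
  push_cast at product
  rw [← mulVec_mulVec, mul_pow, Real.sq_sqrt (by positivity), energy_three_eq_normalDeriv hij w]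
  set x := normalDeriv w i
  set y := normalDeriv w j
  calc 2 / 3 * (x ^ 2 + x * y + y ^ 2)
      ≤ 2 / 3 * ((17 + 4 * √13) / 81 * (7 * x ^ 2 - 11 * x * y + 13 * y ^ 2)) := by
        gcongr
        exact quadForm_le_mul_quadForm x y
    _ = (25 / 9) ^ 2 * (17 + 4 * √13) *
          energy 3 (harmA 3 i *ᵥ harmA 3 j *ᵥ w) (harmA 3 i *ᵥ harmA 3 j *ᵥ w) := by
        linear_combination -(17 + 4 * √13) / 81 * product

theorem weights_give_contraction_SG3 (μ : Fin 3 → Fin 3 → ℝ)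
    (hpos : ∀ i j, 0 < μ i j)
    (hdiag : ∀ i, μ i i < 1 / 9)
    (hoff : ∀ i j, i ≠ j → μ i j < 1 / Real.sqrt (17 + 4 * Real.sqrt 13))
    (K : Fin 3 → Fin 3 → ℝ)
    (hK : ∀ i j, IsLeast {k : ℝ | 0 ≤ k ∧ ∀ v : Fin 3 → ℝ,
      energy 3 ((harmA 3 i * harmA 3 j)⁻¹.mulVec v)
          ((harmA 3 i * harmA 3 j)⁻¹.mulVec v) ≤ k ^ 2 * energy 3 v v} (K i j)) :
    ∀ i j, ((3 : ℝ) / 5) ^ 2 * μ i j * K i j < 1 := by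
  intro i j
  suffices h : ∃ C, 0 < C ∧ μ i j < 1 / C ∧ K i j ≤ 25 / 9 * C by
    obtain ⟨C, hC, hμ, hKC⟩ := h
    calc ((3 : ℝ) / 5) ^ 2 * μ i j * K i j
        ≤ (3 / 5) ^ 2 * μ i j * (25 / 9 * C) :=
          mul_le_mul_of_nonneg_left hKC (mul_nonneg (by positivity) (hpos i j).le)
      _ = μ i j * C := by ring
      _ < 1 := (lt_div_iff₀ hC).1 hμ
  rcases eq_or_ne i j with rfl | hij
  · refine ⟨9, by norm_num, hdiag i, (hK i i).2 ⟨by norm_num, fun v => ?_⟩⟩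
    convert energy_inv_harmA_mul_harmA_mulVec_le i i v using 2
    norm_num
  · exact ⟨√(17 + 4 * √13), by positivity, hoff i j hij, (hK i j).2
      ⟨by positivity, energy_inv_harmA_mul_harmA_mulVec_le_of_ne hij⟩⟩
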